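/- Let K ⊂ ℝⁿ be an isotropic unconditional convex body. Then K ⊆ (√6/2)·n·B₁ⁿ, and consequently for any convex body L ⊆ K with 0 ∈ L, (1/|L|) ∫_L ‖x‖₁ dx ≤ (√6/2)·n. -/

import Mathlib

open MeasureTheory

/-!
Let `Q = K ∩ [0, ∞)ⁿ` and, for each coordinate, let `gᵢ(t)` be the volume of the section of `Q` by
`xᵢ = t`. For `α ∈ Q` the cones with apex `α` over the facets `xᵢ = 0` of `Q` are disjoint, so
`∑ αᵢ gᵢ(0) ≤ n |Q|`, and everything reduces to a lower bound on each `gᵢ(0)`.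

The function `gᵢ` is decreasing, and log-concave by Prékopa–Leindler. Comparing it with a constant
density and with an exponential density of the same mass gives
`|Q|³ / 3 ≤ gᵢ(0)² ∫_Q xᵢ² ≤ 2 |Q|³`. By Loomis–Whitney some `gₖ(0)` is at least
`|Q|^((n-1)/n)`, so the upper bound controls `∫_Q xₖ²`. By isotropy this is the common value of all
the second moments, and the lower bound then yields `|Q|^((n-1)/n) ≤ √6 gᵢ(0)` for every `i`. Since
`|Q| = 2⁻ⁿ`, this gives `∑ αᵢ ≤ √6 n |Q|^(1/n) = (√6 / 2) n`.
-/

section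

open Set Filter Topology
open scoped NNReal ENNReal Pointwise

/-! ### The Prékopa–Leindler inequality -/

theorem volume_add_volume_le_volume_add_of_isCompact {A B : Set ℝ} (hA : IsCompact A)
    (hB : IsCompact B) (hA' : A.Nonempty) (hB' : B.Nonempty) :
    volume A + volume B ≤ volume (A + B) := by
  have hpA : sSup A ∈ A := hA.sSup_mem hA'
  have hqB : sInf B ∈ B := hB.sInf_mem hB'
  set p := sSup A
  set q := sInf B
  have hinter : (q +ᵥ A) ∩ (p +ᵥ B) ⊆ {p + q} := by
    rintro _ ⟨⟨x, hx, rfl⟩, y, hy, hxy⟩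
    have hxp : x ≤ p := le_csSup hA.bddAbove hx
    have hqy : q ≤ y := csInf_le hB.bddBelow hy
    simp only [vadd_eq_add, mem_singleton_iff] at hxy ⊢
    linarith
  have hunion : (q +ᵥ A) ∪ (p +ᵥ B) ⊆ A + B := by
    rintro _ (⟨x, hx, rfl⟩ | ⟨y, hy, rfl⟩)
    · exact ⟨x, hx, q, hqB, add_comm x q⟩
    · exact ⟨p, hpA, y, hy, rfl⟩
  calc volume A + volume B = volume (q +ᵥ A) + volume (p +ᵥ B) := by
        rw [measure_vadd, measure_vadd]
    _ = volume ((q +ᵥ A) ∪ (p +ᵥ B)) + volume ((q +ᵥ A) ∩ (p +ᵥ B)) :=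
        (measure_union_add_inter _ (hB.vadd p).measurableSet).symm
    _ = volume ((q +ᵥ A) ∪ (p +ᵥ B)) := by
        rw [measure_mono_null hinter (measure_singleton _), add_zero]
    _ ≤ volume (A + B) := measure_mono hunion

theorem volume_add_volume_le_volume_add {A B : Set ℝ} (hA : MeasurableSet A)
    (hB : MeasurableSet B) (hA' : A.Nonempty) (hB' : B.Nonempty) :
    volume A + volume B ≤ volume (A + B) := by
  obtain ⟨x, hx⟩ := hA'
  obtain ⟨y, hy⟩ := hB'
  rw [hA.measure_eq_iSup_isCompact, hB.measure_eq_iSup_isCompact]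
  simp only [iSup_and']
  refine ENNReal.biSup_add_biSup_le' ⟨∅, empty_subset _, isCompact_empty⟩
    ⟨∅, empty_subset _, isCompact_empty⟩ fun K hK L hL => ?_
  calc volume K + volume L ≤ volume (insert x K) + volume (insert y L) := by
        gcongr <;> exact subset_insert _ _
    _ ≤ volume (insert x K + insert y L) :=
        volume_add_volume_le_volume_add_of_isCompact (hK.2.insert x) (hL.2.insert y)
          (insert_nonempty _ _) (insert_nonempty _ _)
    _ ≤ volume (A + B) :=
        measure_mono (add_subset_add (insert_subset hx hK.1) (insert_subset hy hL.1))

theorem ennreal_geom_mean_le_arith_mean2_weighted {a b : ℝ} (ha : 0 < a) (hb : 0 < b)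
    (hab : a + b = 1) (x y : ℝ≥0∞) :
    x ^ a * y ^ b ≤ ENNReal.ofReal a * x + ENNReal.ofReal b * y := by
  rcases eq_or_ne x ⊤ with rfl | hx
  · simp [ENNReal.mul_top, ha]
  rcases eq_or_ne y ⊤ with rfl | hy
  · simp [ENNReal.mul_top, hb]
  lift x to NNReal using hx
  lift y to NNReal using hy
  have h := NNReal.geom_mean_le_arith_mean2_weighted a.toNNReal b.toNNReal x y
    (by rw [← Real.toNNReal_add ha.le hb.le, hab, Real.toNNReal_one])
  rw [Real.coe_toNNReal _ ha.le, Real.coe_toNNReal _ hb.le] at h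
  rw [← ENNReal.coe_rpow_of_nonneg _ ha.le, ← ENNReal.coe_rpow_of_nonneg _ hb.le]
  unfold ENNReal.ofReal
  exact_mod_cast h

theorem lintegral_min_one_eq_lintegral_meas_lt {α : Type*} [MeasurableSpace α] (μ : Measure α)
    {f : α → ℝ≥0∞} (hf : Measurable f) :
    ∫⁻ x, min (f x) 1 ∂μ = ∫⁻ r in Ioo (0 : ℝ) 1, μ {x | ENNReal.ofReal r < f x} := by
  have htop (x : α) : min (f x) 1 ≠ ⊤ := (min_lt_of_right_lt ENNReal.one_lt_top).ne
  have hlevel (r : ℝ) (hr : r ∈ Ioi 0) : μ {x | r < (min (f x) 1).toReal} =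
      (Ioo 0 1).indicator (fun r => μ {x | ENNReal.ofReal r < f x}) r := by
    have hlt (x : α) : r < (min (f x) 1).toReal ↔ ENNReal.ofReal r < f x ∧ r < 1 := by
      rw [← ENNReal.ofReal_lt_iff_lt_toReal hr.le (htop x), lt_min_iff, ENNReal.ofReal_lt_one]
    rcases lt_or_ge r 1 with h1 | h1
    · rw [indicator_of_mem (show r ∈ Ioo 0 1 from ⟨hr, h1⟩)]
      simp only [hlt, h1, and_true]
    · rw [indicator_of_notMem fun h : r ∈ Ioo 0 1 => h1.not_gt h.2]
      simp only [hlt, h1.not_gt, and_false, ofPred_false, measure_empty]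
  calc ∫⁻ x, min (f x) 1 ∂μ = ∫⁻ x, ENNReal.ofReal (min (f x) 1).toReal ∂μ := by
        simp only [ENNReal.ofReal_toReal (htop _)]
    _ = ∫⁻ r in Ioi 0, μ {x | r < (min (f x) 1).toReal} :=
        lintegral_eq_lintegral_meas_lt μ (ae_of_all _ fun _ => ENNReal.toReal_nonneg)
          (hf.min measurable_const).ennreal_toReal.aemeasurable
    _ = ∫⁻ r in Ioi 0, (Ioo 0 1).indicator (fun r => μ {x | ENNReal.ofReal r < f x}) r :=
        setLIntegral_congr_fun measurableSet_Ioi hlevel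
    _ = ∫⁻ r in Ioo 0 1, μ {x | ENNReal.ofReal r < f x} := by
        rw [lintegral_indicator measurableSet_Ioo, Measure.restrict_restrict measurableSet_Ioo,
          inter_eq_self_of_subset_left Ioo_subset_Ioi_self]

section

variable {a b : ℝ}

theorem volume_level_add_le (ha : 0 < a) (hb : 0 < b) (hab : a + b = 1) {f g h : ℝ → ℝ≥0∞}
    (hf : Measurable f) (hg : Measurable g) {r : ℝ≥0∞}
    (hfr : ∃ x, r < f x) (hgr : ∃ y, r < g y)
    (H : ∀ x y, f x ^ a * g y ^ b ≤ h (a * x + b * y)) :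
    ENNReal.ofReal a * volume {x | r < f x} + ENNReal.ofReal b * volume {x | r < g x} ≤
      volume {x | r < h x} := by
  have hsub : a • {x | r < f x} + b • {x | r < g x} ⊆ {x | r < h x} := by
    rintro _ ⟨_, ⟨x, hx, rfl⟩, _, ⟨y, hy, rfl⟩, rfl⟩
    calc r = r ^ a * r ^ b := by
          rw [← ENNReal.rpow_add_of_nonneg _ _ ha.le hb.le, hab, ENNReal.rpow_one]
      _ < f x ^ a * g y ^ b :=
          ENNReal.mul_lt_mul (ENNReal.rpow_lt_rpow hx ha) (ENNReal.rpow_lt_rpow hy hb)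
      _ ≤ h (a * x + b * y) := H x y
  calc _ = volume (a • {x | r < f x}) + volume (b • {x | r < g x}) := by
        simp [Measure.addHaar_smul, abs_of_pos ha, abs_of_pos hb]
    _ ≤ volume (a • {x | r < f x} + b • {x | r < g x}) :=
        volume_add_volume_le_volume_add ((measurableSet_lt measurable_const hf).const_smul₀ a)
          ((measurableSet_lt measurable_const hg).const_smul₀ b) (Nonempty.smul_set hfr)
          (Nonempty.smul_set hgr)
    _ ≤ volume {x | r < h x} := measure_mono hsub

theorem lintegral_min_one_add_le (ha : 0 < a) (hb : 0 < b) (hab : a + b = 1) {f g h : ℝ → ℝ≥0∞}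
    (hf : Measurable f) (hg : Measurable g) (hh : Measurable h)
    (hf1 : ∃ x, 1 ≤ f x) (hg1 : ∃ y, 1 ≤ g y)
    (H : ∀ x y, f x ^ a * g y ^ b ≤ h (a * x + b * y)) :
    ENNReal.ofReal a * (∫⁻ x, min (f x) 1) + ENNReal.ofReal b * (∫⁻ x, min (g x) 1) ≤
      ∫⁻ x, h x := by
  have hmeas (f : ℝ → ℝ≥0∞) : Measurable fun r : ℝ => volume {x | ENNReal.ofReal r < f x} :=
    Antitone.measurable fun r s hrs =>
      measure_mono fun x hx => (ENNReal.ofReal_le_ofReal hrs).trans_lt hx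
  calc _ = ∫⁻ r in Ioo (0 : ℝ) 1, (ENNReal.ofReal a * volume {x | ENNReal.ofReal r < f x} +
        ENNReal.ofReal b * volume {x | ENNReal.ofReal r < g x}) := by
        rw [lintegral_add_left ((hmeas f).const_mul _), lintegral_const_mul _ (hmeas f),
          lintegral_const_mul _ (hmeas g), lintegral_min_one_eq_lintegral_meas_lt _ hf,
          lintegral_min_one_eq_lintegral_meas_lt _ hg]
    _ ≤ ∫⁻ r in Ioo (0 : ℝ) 1, volume {x | ENNReal.ofReal r < h x} := by
        refine setLIntegral_mono' measurableSet_Ioo fun r hr => ?_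
        have hr1 : ENNReal.ofReal r < 1 := ENNReal.ofReal_lt_one.2 hr.2
        exact volume_level_add_le ha hb hab hf hg (hf1.imp fun _ => hr1.trans_le)
          (hg1.imp fun _ => hr1.trans_le) H
    _ = ∫⁻ x, min (h x) 1 := (lintegral_min_one_eq_lintegral_meas_lt _ hh).symm
    _ ≤ ∫⁻ x, h x := lintegral_mono fun x => min_le_left _ _

-- Dividing by the truncation levels makes the level sets of `f` and `g` at all heights below `1`
-- nonempty, as the one-dimensional Brunn–Minkowski inequality requires.
theorem lintegral_min_rpow_mul_le (ha : 0 < a) (hb : 0 < b) (hab : a + b = 1) {f g h : ℝ → ℝ≥0∞}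
    (hf : Measurable f) (hg : Measurable g) (hh : Measurable h) {A B : ℝ≥0∞}
    (hA : A ∈ Ioo 0 (⨆ x, f x)) (hB : B ∈ Ioo 0 (⨆ x, g x))
    (H : ∀ x y, f x ^ a * g y ^ b ≤ h (a * x + b * y)) :
    (∫⁻ x, min (f x) A) ^ a * (∫⁻ x, min (g x) B) ^ b ≤ ∫⁻ x, h x := by
  have hscale {f : ℝ → ℝ≥0∞} (hf : Measurable f) {A : ℝ≥0∞} (hA : A ∈ Ioo 0 (⨆ x, f x)) :
      ∫⁻ x, min (f x) A = A * ∫⁻ x, min (f x / A) 1 := by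
    rw [← lintegral_const_mul _ (by fun_prop)]
    congr with x
    rw [mul_min, mul_one, ENNReal.mul_div_cancel hA.1.ne' hA.2.ne_top]
  have hone {f : ℝ → ℝ≥0∞} {A : ℝ≥0∞} (hA : A ∈ Ioo 0 (⨆ x, f x)) : ∃ x, 1 ≤ f x / A := by
    obtain ⟨x, hx⟩ := lt_iSup_iff.1 hA.2
    refine ⟨x, ?_⟩
    rw [ENNReal.le_div_iff_mul_le (.inl hA.1.ne') (.inl hA.2.ne_top), one_mul]
    exact hx.le
  set C := A ^ a * B ^ b
  have hAa : A ^ a ≠ 0 := (ENNReal.rpow_pos hA.1 hA.2.ne_top).ne'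
  have hBb : B ^ b ≠ 0 := (ENNReal.rpow_pos hB.1 hB.2.ne_top).ne'
  have hAa' : A ^ a ≠ ⊤ := ENNReal.rpow_ne_top_of_nonneg ha.le hA.2.ne_top
  have hBb' : B ^ b ≠ ⊤ := ENNReal.rpow_ne_top_of_nonneg hb.le hB.2.ne_top
  have hC0 : C ≠ 0 := mul_ne_zero hAa hBb
  have hCtop : C ≠ ⊤ := ENNReal.mul_ne_top hAa' hBb'
  have HC (x y : ℝ) : (f x / A) ^ a * (g y / B) ^ b ≤ h (a * x + b * y) / C := by
    rw [ENNReal.div_rpow_of_nonneg _ _ ha.le, ENNReal.div_rpow_of_nonneg _ _ hb.le,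
      ← ENNReal.mul_div_mul_comm (.inl hAa) (.inl hAa')]
    gcongr
    exact H x y
  calc _ = C * ((∫⁻ x, min (f x / A) 1) ^ a * (∫⁻ x, min (g x / B) 1) ^ b) := by
        rw [hscale hf hA, hscale hg hB, ENNReal.mul_rpow_of_nonneg _ _ ha.le,
          ENNReal.mul_rpow_of_nonneg _ _ hb.le, mul_mul_mul_comm]
    _ ≤ C * ∫⁻ x, h x / C := by
        gcongr
        exact (ennreal_geom_mean_le_arith_mean2_weighted ha hb hab _ _).trans
          (lintegral_min_one_add_le ha hb hab (hf.div_const _) (hg.div_const _) (hh.div_const _)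
            (hone hA) (hone hB) HC)
    _ = ∫⁻ x, h x := by
        rw [← lintegral_const_mul _ (hh.div_const _)]
        simp only [ENNReal.mul_div_cancel hC0 hCtop]

theorem exists_seq_tendsto_lintegral_min {α : Type*} [MeasurableSpace α] {μ : Measure α}
    {f : α → ℝ≥0∞} (hf : Measurable f) (hf0 : ∫⁻ x, f x ∂μ ≠ 0) :
    ∃ A : ℕ → ℝ≥0∞, (∀ k, A k ∈ Ioo 0 (⨆ x, f x)) ∧
      Tendsto (fun k => ∫⁻ x, min (f x) (A k) ∂μ) atTop (𝓝 (∫⁻ x, f x ∂μ)) := by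
  have hpos : 0 < ⨆ x, f x := by
    refine pos_iff_ne_zero.2 fun h => hf0 ?_
    simp only [ENNReal.iSup_eq_zero.1 h, lintegral_zero]
  obtain ⟨A, hmono, hA, hlim⟩ := exists_seq_strictMono_tendsto' hpos
  refine ⟨A, hA, lintegral_tendsto_of_tendsto_of_monotone
    (fun k => (hf.min measurable_const).aemeasurable)
    (ae_of_all _ fun x k l hkl => min_le_min_left _ (hmono.monotone hkl))
    (ae_of_all _ fun x => ?_)⟩
  simpa [min_eq_left (le_iSup f x)] using (tendsto_const_nhds (x := f x)).min hlim

theorem prekopa_leindler_real (ha : 0 < a) (hb : 0 < b) (hab : a + b = 1) {f g h : ℝ → ℝ≥0∞}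
    (hf : Measurable f) (hg : Measurable g) (hh : Measurable h)
    (H : ∀ x y, f x ^ a * g y ^ b ≤ h (a * x + b * y)) :
    (∫⁻ x, f x) ^ a * (∫⁻ x, g x) ^ b ≤ ∫⁻ x, h x := by
  rcases eq_or_ne (∫⁻ x, f x) 0 with hf0 | hf0
  · simp [hf0, ENNReal.zero_rpow_of_pos ha]
  rcases eq_or_ne (∫⁻ x, g x) 0 with hg0 | hg0
  · simp [hg0, ENNReal.zero_rpow_of_pos hb]
  obtain ⟨A, hA, hAlim⟩ := exists_seq_tendsto_lintegral_min hf hf0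
  obtain ⟨B, hB, hBlim⟩ := exists_seq_tendsto_lintegral_min hg hg0
  have hlim := ENNReal.Tendsto.mul (hAlim.ennrpow_const a) (.inl (by simp [hf0, ha.le]))
    (hBlim.ennrpow_const b) (.inl (by simp [hg0, hb.le]))
  exact le_of_tendsto' hlim fun k => lintegral_min_rpow_mul_le ha hb hab hf hg hh (hA k) (hB k) H

theorem measurable_insertNth {n : ℕ} (i : Fin (n + 1)) :
    Measurable fun z : ℝ × (Fin n → ℝ) => (i.insertNth z.1 z.2 : Fin (n + 1) → ℝ) :=
  (MeasurableEquiv.piFinSuccAbove (fun _ => ℝ) i).symm.measurable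

theorem lintegral_eq_lintegral_insertNth {n : ℕ} (i : Fin (n + 1)) {f : (Fin (n + 1) → ℝ) → ℝ≥0∞}
    (hf : Measurable f) :
    ∫⁻ x, f x = ∫⁻ t : ℝ, ∫⁻ y : Fin n → ℝ, f (i.insertNth t y) := by
  rw [← (volume_preserving_piFinSuccAbove (fun _ => ℝ) i).symm.lintegral_comp hf,
    Measure.volume_eq_prod,
    lintegral_prod _ (by exact (hf.comp (MeasurableEquiv.measurable _)).aemeasurable)]
  rfl

theorem insertNth_convexComb {n : ℕ} (i : Fin (n + 1)) (a b t u : ℝ) (x y : Fin n → ℝ) :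
    (i.insertNth (a * t + b * u) (a • x + b • y) : Fin (n + 1) → ℝ) =
      a • i.insertNth t x + b • i.insertNth u y := by
  ext j
  refine Fin.succAboveCases i ?_ (fun j => ?_) j <;> simp

theorem prekopa_leindler (ha : 0 < a) (hb : 0 < b) (hab : a + b = 1) {n : ℕ}
    {f g h : (Fin n → ℝ) → ℝ≥0∞} (hf : Measurable f) (hg : Measurable g) (hh : Measurable h)
    (H : ∀ x y, f x ^ a * g y ^ b ≤ h (a • x + b • y)) :
    (∫⁻ x, f x) ^ a * (∫⁻ x, g x) ^ b ≤ ∫⁻ x, h x := by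
  induction n with
  | zero =>
    rw [volume_pi, Measure.pi_of_empty, lintegral_dirac, lintegral_dirac, lintegral_dirac]
    exact (H _ _).trans_eq (congrArg h (Subsingleton.elim _ _))
  | succ n ih =>
    have hjoint {f : (Fin (n + 1) → ℝ) → ℝ≥0∞} (hf : Measurable f) :
        Measurable fun z : ℝ × (Fin n → ℝ) => f (Fin.insertNth 0 z.1 z.2) :=
      hf.comp (measurable_insertNth 0)
    have hslice {f : (Fin (n + 1) → ℝ) → ℝ≥0∞} (hf : Measurable f) (t : ℝ) :
        Measurable fun y : Fin n → ℝ => f (Fin.insertNth 0 t y) :=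
      (hjoint hf).comp measurable_prodMk_left
    rw [lintegral_eq_lintegral_insertNth 0 hf, lintegral_eq_lintegral_insertNth 0 hg,
      lintegral_eq_lintegral_insertNth 0 hh]
    refine prekopa_leindler_real ha hb hab (hjoint hf).lintegral_prod_right'
      (hjoint hg).lintegral_prod_right' (hjoint hh).lintegral_prod_right' fun t u => ?_
    refine ih (hslice hf t) (hslice hg u) (hslice hh _) fun x y => ?_
    rw [insertNth_convexComb]
    exact H _ _

end

section

variable {n : ℕ} {Q : Set (Fin (n + 1) → ℝ)}

/-! ### Coordinate sections and the Loomis–Whitney inequality -/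

/-- The section of `Q` by the hyperplane `x i = t`, expressed in the remaining coordinates. -/
def coordSlice {n : ℕ} (Q : Set (Fin (n + 1) → ℝ)) (i : Fin (n + 1)) (t : ℝ) :
    Set (Fin n → ℝ) :=
  {y | i.insertNth t y ∈ Q}

theorem measurableSet_coordSlice (hQ : MeasurableSet Q) (i : Fin (n + 1)) (t : ℝ) :
    MeasurableSet (coordSlice Q i t) :=
  ((measurable_insertNth i).comp measurable_prodMk_left) hQ

theorem measurable_volume_coordSlice (hQ : MeasurableSet Q) (i : Fin (n + 1)) :
    Measurable fun t => volume (coordSlice Q i t) :=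
  measurable_measure_prodMk_left (measurable_insertNth i hQ)

theorem lintegral_volume_coordSlice (hQ : MeasurableSet Q) (i : Fin (n + 1)) :
    ∫⁻ t, volume (coordSlice Q i t) = volume Q := by
  rw [← lintegral_indicator_one hQ,
    lintegral_eq_lintegral_insertNth i (measurable_one.indicator hQ)]
  refine lintegral_congr fun t => ?_
  rw [← lintegral_indicator_one (measurableSet_coordSlice hQ i t)]
  rfl

theorem lintegral_pow_card_le_mul_prod_lintegral {α ι : Type*} [MeasurableSpace α] {μ : Measure α}
    [Fintype ι] [Nonempty ι] {φ : α → ℝ≥0∞} {ψ : ι → α → ℝ≥0∞} (hψ : ∀ i, AEMeasurable (ψ i) μ)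
    {C : ℝ≥0∞} (h : ∀ x, φ x ^ Fintype.card ι ≤ C * ∏ i, ψ i x) :
    (∫⁻ x, φ x ∂μ) ^ Fintype.card ι ≤ C * ∏ i, ∫⁻ x, ψ i x ∂μ := by
  have hcard : Fintype.card ι ≠ 0 := Fintype.card_ne_zero
  set p : ℝ := (Fintype.card ι : ℝ)⁻¹ with hp
  have hp0 : 0 ≤ p := by positivity
  have hsplit (u : ι → ℝ≥0∞) : (C * ∏ i, u i) ^ p = C ^ p * ∏ i, u i ^ p := by
    rw [ENNReal.mul_rpow_of_nonneg _ _ hp0, ENNReal.prod_rpow_of_nonneg hp0]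
  have hroot (x : α) : φ x ≤ C ^ p * ∏ i, ψ i x ^ p := by
    rw [← hsplit, ← ENNReal.pow_rpow_inv_natCast hcard (φ x)]
    exact ENNReal.rpow_le_rpow (h x) hp0
  have hholder : ∫⁻ x, φ x ∂μ ≤ (C * ∏ i, ∫⁻ x, ψ i x ∂μ) ^ p :=
    calc ∫⁻ x, φ x ∂μ ≤ ∫⁻ x, C ^ p * ∏ i, ψ i x ^ p ∂μ := lintegral_mono hroot
      _ = C ^ p * ∫⁻ x, ∏ i, ψ i x ^ p ∂μ := lintegral_const_mul'' _ (by fun_prop)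
      _ ≤ C ^ p * ∏ i, (∫⁻ x, ψ i x ∂μ) ^ p := by
        gcongr
        exact ENNReal.lintegral_prod_norm_pow_le _ (fun i _ => hψ i)
          (by simp [hp, hcard]) fun _ _ => hp0
      _ = (C * ∏ i, ∫⁻ x, ψ i x ∂μ) ^ p := (hsplit _).symm
  calc _ ≤ ((C * ∏ i, ∫⁻ x, ψ i x ∂μ) ^ p) ^ Fintype.card ι := by gcongr
    _ = C * ∏ i, ∫⁻ x, ψ i x ∂μ := ENNReal.rpow_inv_natCast_pow hcard _

theorem loomis_whitney (hQ : MeasurableSet Q) (hne : Q.Nonempty)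
    {T : Fin (n + 1) → Set (Fin n → ℝ)} (hT : ∀ i, MeasurableSet (T i))
    (hQT : ∀ x ∈ Q, ∀ i, i.removeNth x ∈ T i) :
    volume Q ^ n ≤ ∏ i, volume (T i) := by
  induction n with
  | zero =>
    obtain ⟨x, hx⟩ := hne
    have hT0 : T 0 = univ := Subsingleton.eq_univ_of_nonempty ⟨_, hQT x hx 0⟩
    simp [hT0, volume_pi]
  | succ n ih =>
    have hslice (t : ℝ) : volume (coordSlice Q 0 t) ^ (n + 1) ≤
        volume (T 0) * ∏ j : Fin (n + 1), volume (coordSlice (T j.succ) 0 t) := by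
      rcases (coordSlice Q 0 t).eq_empty_or_nonempty with hempty | hne
      · simp [hempty]
      have hle0 : volume (coordSlice Q 0 t) ≤ volume (T 0) := by
        refine measure_mono fun y hy => ?_
        simpa using hQT _ hy 0
      rw [pow_succ']
      gcongr
      refine ih (measurableSet_coordSlice hQ 0 t) hne
        (fun j => measurableSet_coordSlice (hT j.succ) 0 t) fun y hy j => ?_
      have hyj := hQT _ hy j.succ
      rw [Fin.insertNth_zero'] at hyj
      rw [coordSlice, mem_ofPred_eq, Fin.insertNth_zero']
      convert hyj using 1
      ext k
      refine Fin.cases ?_ (fun k => ?_) k <;> simp [Fin.removeNth]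
    have hint := lintegral_pow_card_le_mul_prod_lintegral (μ := volume)
      (fun j : Fin (n + 1) => (measurable_volume_coordSlice (hT j.succ) 0).aemeasurable)
      (fun t => by simpa only [Fintype.card_fin] using hslice t)
    rw [Fin.prod_univ_succ]
    simpa only [Fintype.card_fin, lintegral_volume_coordSlice hQ,
      lintegral_volume_coordSlice (hT _)] using hint

/-! ### Cones over the facets -/

theorem setLIntegral_Ioo_one_sub_div_pow {a : ℝ} (ha : 0 < a) (n : ℕ) :
    ∫⁻ t in Ioo 0 a, ENNReal.ofReal ((1 - t / a) ^ n) = ENNReal.ofReal (a / (n + 1)) := by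
  have hcont : Continuous fun t : ℝ => (1 - t / a) ^ n := by fun_prop
  have hnonneg : ∀ᵐ t ∂volume.restrict (Ioo 0 a), 0 ≤ (1 - t / a) ^ n :=
    ae_restrict_of_forall_mem measurableSet_Ioo fun t ht =>
      pow_nonneg (sub_nonneg.2 ((div_le_one ha).2 ht.2.le)) n
  rw [← ofReal_integral_eq_lintegral_ofReal
    (hcont.integrableOn_Icc.mono_set Ioo_subset_Icc_self) hnonneg,
    ← integral_Ioc_eq_integral_Ioo, ← intervalIntegral.integral_of_le ha.le,
    intervalIntegral.integral_comp_sub_div (fun u => u ^ n) ha.ne']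
  simp [ha.ne', integral_pow, div_eq_mul_inv]

theorem volume_inter_pi_Ioi_zero {S : Set (Fin n → ℝ)} (hS : S ⊆ Ici 0) :
    volume (S ∩ univ.pi fun _ => Ioi 0) = volume S := by
  have hae : (S ∩ univ.pi fun _ => Ioi 0 : Set (Fin n → ℝ)) =ᵐ[volume] (S ∩ Ici 0 : Set _) :=
    ae_eq_set_inter (ae_eq_refl S) (Measure.univ_pi_Ioi_ae_eq_Ici (f := 0))
  rw [measure_congr hae, inter_eq_self_of_subset_left hS]

/-- The points of `Q` below the level `x i = α i` whose central projection from `α` to the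
hyperplane `x i = 0` has positive coordinates, with the denominator `α i - x i` of the projection
cleared. For convex `Q` in the positive orthant it contains the open cone with apex `α` over
the facet `x i = 0` of `Q`. -/
def facetCone (Q : Set (Fin (n + 1) → ℝ)) (α : Fin (n + 1) → ℝ) (i : Fin (n + 1)) :
    Set (Fin (n + 1) → ℝ) :=
  Q ∩ {x | x i < α i ∧ ∀ j : Fin n, x i * α (i.succAbove j) < x (i.succAbove j) * α i}

theorem measurableSet_facetCone (hQ : MeasurableSet Q) (α : Fin (n + 1) → ℝ) (i : Fin (n + 1)) :
    MeasurableSet (facetCone Q α i) := by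
  refine hQ.inter ?_
  simp only [ofPred_and, ofPred_forall]
  exact (measurableSet_lt (by fun_prop) (by fun_prop)).inter
    (MeasurableSet.iInter fun j => measurableSet_lt (by fun_prop) (by fun_prop))

theorem pairwise_disjoint_facetCone (Q : Set (Fin (n + 1) → ℝ)) (α : Fin (n + 1) → ℝ) :
    Pairwise (Function.onFun Disjoint (facetCone Q α)) := by
  refine fun i k hik => disjoint_left.2 fun x hi hk => ?_
  obtain ⟨j, rfl⟩ := Fin.exists_succAbove_eq hik.symm
  obtain ⟨l, hl⟩ := Fin.exists_succAbove_eq hik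
  have hlt := hk.2.2 l
  rw [hl] at hlt
  exact lt_asymm (hi.2.2 j) hlt

theorem vadd_smul_subset_coordSlice_facetCone (hconv : Convex ℝ Q) {α : Fin (n + 1) → ℝ}
    (hα : α ∈ Q) {i : Fin (n + 1)} (hi : 0 < α i) {c : ℝ} (hc : c ∈ Ioo 0 1) :
    c • i.removeNth α +ᵥ (1 - c) • (coordSlice Q i 0 ∩ univ.pi fun _ => Ioi 0) ⊆
      coordSlice (facetCone Q α i) i (c * α i) := by
  have hc' : 0 < 1 - c := sub_pos.2 hc.2
  rintro _ ⟨_, ⟨z, ⟨hzQ, hz0⟩, rfl⟩, rfl⟩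
  have hcomb := insertNth_convexComb i c (1 - c) (α i) 0 (i.removeNth α) z
  rw [mul_zero, add_zero, Fin.insertNth_self_removeNth] at hcomb
  refine ⟨?_, ?_, fun j => ?_⟩
  · exact hcomb ▸ hconv hα hzQ hc.1.le hc'.le (by ring)
  · simpa using mul_lt_of_lt_one_left hi hc.2
  · have hpos : 0 < (1 - c) * z j * α i := mul_pos (mul_pos hc' (hz0 j trivial)) hi
    simp only [vadd_eq_add, Fin.insertNth_apply_same, Fin.insertNth_apply_succAbove, Pi.add_apply,
      Pi.smul_apply, smul_eq_mul, Fin.removeNth]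
    linarith

theorem coordSlice_subset_Ici (hnonneg : Q ⊆ Ici 0) (i : Fin (n + 1)) (t : ℝ) :
    coordSlice Q i t ⊆ Ici 0 := fun y hy j => by
  simpa using hnonneg hy (i.succAbove j)

theorem mul_volume_coordSlice_le_volume_facetCone (hQ : MeasurableSet Q) (hconv : Convex ℝ Q)
    (hnonneg : Q ⊆ Ici 0) {α : Fin (n + 1) → ℝ} (hα : α ∈ Q) (i : Fin (n + 1)) :
    ENNReal.ofReal (α i / (n + 1)) * volume (coordSlice Q i 0) ≤ volume (facetCone Q α i) := by
  rcases (hnonneg hα i).eq_or_lt with hi | hi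
  · simp [← hi]
  have hslice (t : ℝ) (ht : t ∈ Ioo 0 (α i)) :
      ENNReal.ofReal ((1 - t / α i) ^ n) * volume (coordSlice Q i 0) ≤
        volume (coordSlice (facetCone Q α i) i t) := by
    have hc : t / α i ∈ Ioo 0 1 := ⟨div_pos ht.1 hi, (div_lt_one hi).2 ht.2⟩
    have hsub := vadd_smul_subset_coordSlice_facetCone hconv hα hi hc
    rw [div_mul_cancel₀ _ hi.ne'] at hsub
    refine le_of_eq_of_le ?_ (measure_mono hsub)
    rw [measure_vadd, Measure.addHaar_smul_of_nonneg _ (sub_nonneg.2 hc.2.le),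
      volume_inter_pi_Ioi_zero (coordSlice_subset_Ici hnonneg i 0), Module.finrank_fin_fun]
  calc ENNReal.ofReal (α i / (n + 1)) * volume (coordSlice Q i 0)
      = ∫⁻ t in Ioo 0 (α i), ENNReal.ofReal ((1 - t / α i) ^ n) * volume (coordSlice Q i 0) := by
        rw [lintegral_mul_const _ (by fun_prop), setLIntegral_Ioo_one_sub_div_pow hi]
    _ ≤ ∫⁻ t in Ioo 0 (α i), volume (coordSlice (facetCone Q α i) i t) :=
        setLIntegral_mono' measurableSet_Ioo hslice
    _ ≤ ∫⁻ t, volume (coordSlice (facetCone Q α i) i t) := setLIntegral_le_lintegral _ _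
    _ = volume (facetCone Q α i) :=
        lintegral_volume_coordSlice (measurableSet_facetCone hQ α i) i

theorem sum_mul_volume_coordSlice_le_volume (hQ : MeasurableSet Q) (hconv : Convex ℝ Q)
    (hnonneg : Q ⊆ Ici 0) {α : Fin (n + 1) → ℝ} (hα : α ∈ Q) :
    ∑ i, ENNReal.ofReal (α i / (n + 1)) * volume (coordSlice Q i 0) ≤ volume Q :=
  calc _ ≤ ∑ i, volume (facetCone Q α i) := Finset.sum_le_sum fun i _ =>
        mul_volume_coordSlice_le_volume_facetCone hQ hconv hnonneg hα i
    _ = volume (⋃ i, facetCone Q α i) := by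
        rw [measure_iUnion (pairwise_disjoint_facetCone Q α) (measurableSet_facetCone hQ α),
          tsum_fintype]
    _ ≤ volume Q := measure_mono (iUnion_subset fun i => inter_subset_left)

end

/-! ### Moment comparisons on the half-line -/

theorem setIntegral_mul_le_setIntegral_mul_of_crossing {s : Set ℝ} (hs : MeasurableSet s)
    {w f g : ℝ → ℝ} {c : ℝ} (hc : c ∈ s) (hw : MonotoneOn w s)
    (hbefore : ∀ t ∈ s, t < c → g t ≤ f t) (hafter : ∀ t ∈ s, c < t → f t ≤ g t)
    (hf : IntegrableOn f s) (hg : IntegrableOn g s)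
    (hwf : IntegrableOn (fun t => w t * f t) s) (hwg : IntegrableOn (fun t => w t * g t) s)
    (heq : ∫ t in s, f t = ∫ t in s, g t) :
    ∫ t in s, w t * f t ≤ ∫ t in s, w t * g t := by
  have hpointwise (t : ℝ) (ht : t ∈ s) :
      w t * f t - w c * f t ≤ w t * g t - w c * g t := by
    rcases lt_trichotomy t c with htc | rfl | htc
    · nlinarith [hw ht hc htc.le, hbefore t ht htc]
    · simp
    · nlinarith [hw hc ht htc.le, hafter t ht htc]
  have hint : ∫ t in s, (w t * f t - w c * f t) ≤ ∫ t in s, (w t * g t - w c * g t) :=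
    setIntegral_mono_on (hwf.sub (hf.const_mul (w c)))
      (hwg.sub (hg.const_mul (w c))) hs hpointwise
  rw [integral_sub hwf (hf.const_mul _), integral_sub hwg (hg.const_mul _),
    integral_const_mul, integral_const_mul, heq] at hint
  exact (sub_le_sub_iff_right _).1 hint

theorem setIntegral_Ici_pow_mul_exp_neg_mul (n : ℕ) {k : ℝ} (hk : 0 < k) :
    ∫ t in Ici (0 : ℝ), t ^ n * Real.exp (-(k * t)) = n.factorial / k ^ (n + 1) := by
  have h := Real.integral_rpow_mul_exp_neg_mul_Ioi (a := n + 1) (by positivity) hk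
  rw [add_sub_cancel_right, Real.Gamma_nat_eq_factorial] at h
  norm_cast at h
  rw [integral_Ici_eq_integral_Ioi, h, one_div, inv_pow, mul_comm, div_eq_mul_inv]

theorem integrableOn_Ici_pow_mul_exp_neg_mul (n : ℕ) {k : ℝ} (hk : 0 < k) :
    IntegrableOn (fun t => t ^ n * Real.exp (-(k * t))) (Ici (0 : ℝ)) := by
  refine Integrable.of_integral_ne_zero ?_
  rw [setIntegral_Ici_pow_mul_exp_neg_mul n hk]
  positivity

-- The comparison is with the constant density `s` on an interval `[0, c]` of the same integral.
theorem pow_three_setIntegral_le {g : ℝ → ℝ} {s : ℝ} (hg0 : ∀ t ∈ Ici (0 : ℝ), 0 ≤ g t)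
    (hgs : ∀ t ∈ Ici (0 : ℝ), g t ≤ s) (hg : IntegrableOn g (Ici 0))
    (hg2 : IntegrableOn (fun t => t ^ 2 * g t) (Ici 0)) :
    (∫ t in Ici 0, g t) ^ 3 ≤ 3 * s ^ 2 * ∫ t in Ici 0, t ^ 2 * g t := by
  set v := ∫ t in Ici 0, g t
  have hv : 0 ≤ v := setIntegral_nonneg measurableSet_Ici hg0
  rcases ((hg0 0 self_mem_Ici).trans (hgs 0 self_mem_Ici)).eq_or_lt with rfl | hs
  · have hv0 : v = 0 :=
      setIntegral_eq_zero_of_forall_eq_zero fun t ht => (hgs t ht).antisymm (hg0 t ht)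
    simp [hv0]
  set c := v / s
  have hc : 0 ≤ c := div_nonneg hv hs.le
  set f : ℝ → ℝ := (Icc 0 c).indicator fun _ => s
  have hfc {t : ℝ} (ht : t ∈ Icc 0 c) : f t = s := indicator_of_mem ht _
  have hmul (m : ℕ) : (fun t => t ^ m * f t) = (Icc 0 c).indicator fun t => t ^ m * s := by
    ext t
    exact (indicator_mul_right _ (· ^ m) _).symm
  have hfint (m : ℕ) : IntegrableOn (fun t => t ^ m * f t) (Ici 0) := by
    rw [hmul]
    exact ((by fun_prop : Continuous fun t : ℝ => t ^ m * s).integrableOn_Icc.integrable_indicator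
      measurableSet_Icc).integrableOn
  have hmoment (m : ℕ) : ∫ t in Ici 0, t ^ m * f t = c ^ (m + 1) / (m + 1) * s := by
    rw [hmul, setIntegral_indicator measurableSet_Icc,
      inter_eq_self_of_subset_right Icc_subset_Ici_self, integral_mul_const,
      integral_Icc_eq_integral_Ioc, ← intervalIntegral.integral_of_le hc, integral_pow]
    simp
  have hcross := setIntegral_mul_le_setIntegral_mul_of_crossing (f := f) (w := fun t => t ^ 2)
    measurableSet_Ici (mem_Ici.2 hc) (pow_left_monotoneOn (n := 2))
    (fun t ht htc => (hgs t ht).trans_eq (hfc ⟨ht, htc.le⟩).symm)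
    (fun t ht htc => (indicator_of_notMem (fun h => htc.not_ge h.2) _).trans_le (hg0 t ht))
    (by simpa using hfint 0) hg (hfint 2) hg2
    (by simpa [c, hs.ne'] using hmoment 0)
  rw [hmoment 2] at hcross
  calc v ^ 3 = 3 * s ^ 2 * (c ^ (2 + 1) / ((2 : ℕ) + 1) * s) := by
        rw [← div_mul_cancel₀ v hs.ne']
        push_cast
        ring
    _ ≤ _ := by gcongr

theorem exp_le_of_logConcave {g : ℝ → ℝ} {k s t : ℝ} (hg0 : 0 < g 0)
    (hlog : ∀ s, 0 ≤ s → ∀ θ ∈ Ioo (0 : ℝ) 1, g 0 ^ (1 - θ) * g s ^ θ ≤ g (θ * s))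
    (hs : g 0 * Real.exp (-(k * s)) ≤ g s) (ht0 : 0 ≤ t) (hts : t < s) :
    g 0 * Real.exp (-(k * t)) ≤ g t := by
  rcases ht0.eq_or_lt with rfl | ht0
  · simp
  have hs0 : 0 < s := ht0.trans hts
  have hθ : t / s ∈ Ioo (0 : ℝ) 1 := ⟨div_pos ht0 hs0, (div_lt_one hs0).2 hts⟩
  calc g 0 * Real.exp (-(k * t))
      = g 0 ^ (1 - t / s) * (g 0 * Real.exp (-(k * s))) ^ (t / s) := by
        rw [Real.mul_rpow hg0.le (Real.exp_pos _).le, ← mul_assoc, ← Real.rpow_add hg0,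
          sub_add_cancel, Real.rpow_one, ← Real.exp_mul, neg_mul, mul_assoc,
          mul_div_cancel₀ _ hs0.ne']
    _ ≤ g 0 ^ (1 - t / s) * g s ^ (t / s) := by
        gcongr
    _ ≤ g (t / s * s) := hlog s hs0.le _ hθ
    _ = g t := by rw [div_mul_cancel₀ _ hs0.ne']

theorem exists_crossing_exp {g : ℝ → ℝ} {k : ℝ} (hg0 : 0 < g 0)
    (hlog : ∀ s, 0 ≤ s → ∀ θ ∈ Ioo (0 : ℝ) 1, g 0 ^ (1 - θ) * g s ^ θ ≤ g (θ * s))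
    (hbdd : ∃ R, ∀ t, R < t → g t = 0) :
    ∃ c, 0 ≤ c ∧ (∀ t ∈ Ici 0, t < c → g 0 * Real.exp (-(k * t)) ≤ g t) ∧
      ∀ t ∈ Ici 0, c < t → g t ≤ g 0 * Real.exp (-(k * t)) := by
  obtain ⟨R, hR⟩ := hbdd
  set S := {t | 0 ≤ t ∧ g 0 * Real.exp (-(k * t)) ≤ g t}
  have hS0 : (0 : ℝ) ∈ S := ⟨le_rfl, by simp⟩
  have hSbdd : BddAbove S := ⟨R, fun t ht => le_of_not_gt fun hRt =>
    (ht.2.trans_eq (hR t hRt)).not_gt (by positivity)⟩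
  refine ⟨sSup S, le_csSup hSbdd hS0, fun t ht htc => ?_, fun t ht hct => ?_⟩
  · obtain ⟨s, hs, hts⟩ := exists_lt_of_lt_csSup ⟨0, hS0⟩ htc
    exact exp_le_of_logConcave hg0 hlog hs.2 ht hts
  · by_contra! hlt
    exact hct.not_ge (le_csSup hSbdd ⟨ht, hlt.le⟩)

-- The comparison is with the exponential density that agrees with `g` at `0` and has the same
-- integral: by log-concavity, `g` crosses it only once.
theorem sq_mul_setIntegral_sq_mul_le {g : ℝ → ℝ} (hg0 : 0 ≤ g 0)
    (hlog : ∀ s, 0 ≤ s → ∀ θ ∈ Ioo (0 : ℝ) 1, g 0 ^ (1 - θ) * g s ^ θ ≤ g (θ * s))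
    (hbdd : ∃ R, ∀ t, R < t → g t = 0) (hv : 0 < ∫ t in Ici 0, g t)
    (hg : IntegrableOn g (Ici 0)) (hg2 : IntegrableOn (fun t => t ^ 2 * g t) (Ici 0)) :
    g 0 ^ 2 * ∫ t in Ici 0, t ^ 2 * g t ≤ 2 * (∫ t in Ici 0, g t) ^ 3 := by
  set v := ∫ t in Ici 0, g t
  rcases hg0.eq_or_lt with hg0 | hg0
  · rw [← hg0]
    simp [hv.le]
  set k := g 0 / v
  have hk : 0 < k := div_pos hg0 hv
  set e : ℝ → ℝ := fun t => g 0 * Real.exp (-(k * t)) with he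
  have hmul (m : ℕ) : (fun t => t ^ m * e t) = fun t => g 0 * (t ^ m * Real.exp (-(k * t))) := by
    ext t
    simp only [he]
    ring
  have heint (m : ℕ) : IntegrableOn (fun t => t ^ m * e t) (Ici 0) := by
    rw [hmul]
    exact (integrableOn_Ici_pow_mul_exp_neg_mul m hk).const_mul _
  have hmoment (m : ℕ) : ∫ t in Ici 0, t ^ m * e t = g 0 * (m.factorial / k ^ (m + 1)) := by
    rw [hmul, integral_const_mul, setIntegral_Ici_pow_mul_exp_neg_mul m hk]
  have hev : ∫ t in Ici 0, e t = v := by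
    simpa [k, mul_div_cancel₀ _ hg0.ne'] using hmoment 0
  obtain ⟨c, hc, hbefore, hafter⟩ := exists_crossing_exp (k := k) hg0 hlog hbdd
  have hcross := setIntegral_mul_le_setIntegral_mul_of_crossing (w := fun t => t ^ 2)
    measurableSet_Ici (mem_Ici.2 hc) (pow_left_monotoneOn (n := 2)) hbefore hafter hg
    (by simpa using heint 0) hg2 (heint 2) hev.symm
  calc g 0 ^ 2 * ∫ t in Ici 0, t ^ 2 * g t
      ≤ g 0 ^ 2 * (g 0 * (Nat.factorial 2 / k ^ (2 + 1))) := by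
        rw [← hmoment]
        gcongr
    _ = 2 * v ^ 3 := by
        simp only [k, div_pow]
        field_simp
        norm_num

/-! ### Convex corners -/

section

variable {n : ℕ} {Q : Set (Fin (n + 1) → ℝ)}

theorem volume_coordSlice_rpow_mul_le (ha : 0 < a) (hb : 0 < b) (hab : a + b = 1)
    (hQ : MeasurableSet Q) (hconv : Convex ℝ Q) (i : Fin (n + 1)) (s t : ℝ) :
    volume (coordSlice Q i s) ^ a * volume (coordSlice Q i t) ^ b ≤
      volume (coordSlice Q i (a * s + b * t)) := by
  have hmeas (t : ℝ) := measurableSet_coordSlice hQ i t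
  have hind (t : ℝ) : Measurable ((coordSlice Q i t).indicator (1 : (Fin n → ℝ) → ℝ≥0∞)) :=
    measurable_one.indicator (hmeas t)
  simp only [← lintegral_indicator_one (hmeas _)]
  refine prekopa_leindler ha hb hab (hind s) (hind t) (hind _) fun x y => ?_
  by_cases hx : x ∈ coordSlice Q i s
  swap
  · simp [hx, ENNReal.zero_rpow_of_pos ha]
  by_cases hy : y ∈ coordSlice Q i t
  swap
  · simp [hy, ENNReal.zero_rpow_of_pos hb]
  have hxy : a • x + b • y ∈ coordSlice Q i (a * s + b * t) := by
    rw [coordSlice, mem_ofPred_eq, insertNth_convexComb]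
    exact hconv hx hy ha.le hb.le hab
  simp [hx, hy, hxy]

theorem map_eval_restrict_eq_withDensity (hQ : MeasurableSet Q) (i : Fin (n + 1)) :
    (volume.restrict Q).map (fun x => x i) =
      volume.withDensity fun t => volume (coordSlice Q i t) := by
  ext s hs
  have hpre : MeasurableSet ((fun x : Fin (n + 1) → ℝ => x i) ⁻¹' s) := measurable_pi_apply i hs
  rw [Measure.map_apply (measurable_pi_apply i) hs, Measure.restrict_apply hpre,
    withDensity_apply _ hs, ← lintegral_volume_coordSlice (hpre.inter hQ) i,
    ← lintegral_indicator hs]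
  refine lintegral_congr fun t => ?_
  by_cases ht : t ∈ s
  · rw [indicator_of_mem ht]
    congr 1
    ext y
    simp [coordSlice, ht]
  · have hempty : coordSlice ((fun x => x i) ⁻¹' s ∩ Q) i t = ∅ :=
      eq_empty_of_forall_notMem fun y hy => ht (by simpa using hy.1)
    rw [indicator_of_notMem ht, hempty, measure_empty]

theorem isCompact_coordSlice (hQ : IsCompact Q) (i : Fin (n + 1)) (t : ℝ) :
    IsCompact (coordSlice Q i t) := by
  have hcont : Continuous fun y : Fin n → ℝ => (i.insertNth t y : Fin (n + 1) → ℝ) :=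
    continuous_const.finInsertNth i continuous_id
  have hproj : Continuous fun x : Fin (n + 1) → ℝ => i.removeNth x :=
    continuous_pi fun j => continuous_apply _
  exact (hQ.image hproj).of_isClosed_subset (hQ.isClosed.preimage hcont) fun y hy =>
    ⟨_, hy, Fin.removeNth_insertNth (α := fun _ => ℝ) i t y⟩

theorem integral_comp_eval (hQ : IsCompact Q) (i : Fin (n + 1)) {w : ℝ → ℝ} (hw : Continuous w) :
    ∫ x in Q, w (x i) = ∫ t, w t * volume.real (coordSlice Q i t) := by
  rw [← integral_map (φ := fun x : Fin (n + 1) → ℝ => x i)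
      (measurable_pi_apply i).aemeasurable hw.aestronglyMeasurable,
    map_eval_restrict_eq_withDensity hQ.measurableSet,
    integral_withDensity_eq_integral_toReal_smul
      (measurable_volume_coordSlice hQ.measurableSet i)
      (ae_of_all _ fun t => (isCompact_coordSlice hQ i t).measure_lt_top)]
  simp only [smul_eq_mul, mul_comm, measureReal_def]

theorem integrable_mul_volume_coordSlice (hQ : IsCompact Q) (i : Fin (n + 1)) {w : ℝ → ℝ}
    (hw : Continuous w) : Integrable fun t => w t * volume.real (coordSlice Q i t) := by
  have hmap : Integrable w ((volume.restrict Q).map fun x => x i) :=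
    (integrable_map_measure hw.aestronglyMeasurable (measurable_pi_apply i).aemeasurable).2
      ((hw.comp (continuous_apply i)).continuousOn.integrableOn_compact hQ)
  rw [map_eval_restrict_eq_withDensity hQ.measurableSet,
    integrable_withDensity_iff_integrable_smul' (measurable_volume_coordSlice hQ.measurableSet i)
      (ae_of_all _ fun t => (isCompact_coordSlice hQ i t).measure_lt_top)] at hmap
  simpa only [smul_eq_mul, mul_comm, measureReal_def] using hmap

theorem exists_coordSlice_eq_empty (hQ : IsCompact Q) (i : Fin (n + 1)) :
    ∃ R, ∀ t, R < t → coordSlice Q i t = ∅ := by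
  obtain ⟨R, hR⟩ := (hQ.image (continuous_apply i)).bddAbove
  refine ⟨R, fun t ht => eq_empty_of_forall_notMem fun y hy => ht.not_ge ?_⟩
  simpa using hR (mem_image_of_mem _ hy)

theorem volume_real_coordSlice_rpow_mul_le (hQ : IsCompact Q) (hconv : Convex ℝ Q)
    (i : Fin (n + 1)) (t : ℝ) {θ : ℝ} (hθ : θ ∈ Ioo (0 : ℝ) 1) :
    volume.real (coordSlice Q i 0) ^ (1 - θ) * volume.real (coordSlice Q i t) ^ θ ≤
      volume.real (coordSlice Q i (θ * t)) := by
  have h := volume_coordSlice_rpow_mul_le (sub_pos.2 hθ.2) hθ.1 (sub_add_cancel 1 θ)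
    hQ.measurableSet hconv i 0 t
  rw [mul_zero, zero_add] at h
  simpa only [measureReal_def, ENNReal.toReal_mul, ENNReal.toReal_rpow] using
    ENNReal.toReal_mono (isCompact_coordSlice hQ i _).measure_lt_top.ne h

/-- A convex corner (or compact convex anti-blocking body): a compact convex subset of the
positive orthant that contains, with each of its points, every smaller point of the orthant. -/
structure IsConvexCorner {ι : Type*} (Q : Set (ι → ℝ)) : Prop where
  convex : Convex ℝ Q
  isCompact : IsCompact Q
  nonneg : Q ⊆ Ici 0
  mem_of_le : ∀ {x y : ι → ℝ}, x ∈ Q → 0 ≤ y → y ≤ x → y ∈ Q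

namespace IsConvexCorner

theorem coordSlice_anti (hQ : IsConvexCorner Q) (i : Fin (n + 1)) {s t : ℝ} (hs : 0 ≤ s)
    (hst : s ≤ t) : coordSlice Q i t ⊆ coordSlice Q i s := fun y hy => by
  have hy0 : 0 ≤ y := coordSlice_subset_Ici hQ.nonneg i t hy
  refine hQ.mem_of_le hy ?_ ?_
  · exact Fin.le_insertNth_iff.2 ⟨hs, hy0⟩
  · exact Fin.insertNth_le_iff.2 ⟨by simpa using hst, by simp⟩

theorem removeNth_mem_coordSlice_zero (hQ : IsConvexCorner Q) {x : Fin (n + 1) → ℝ} (hx : x ∈ Q)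
    (i : Fin (n + 1)) : i.removeNth x ∈ coordSlice Q i 0 :=
  hQ.coordSlice_anti i le_rfl (hQ.nonneg hx i) (by
    rwa [coordSlice, mem_ofPred_eq, Fin.insertNth_self_removeNth])

theorem setIntegral_comp_eval (hQ : IsConvexCorner Q) (i : Fin (n + 1)) {w : ℝ → ℝ}
    (hw : Continuous w) :
    ∫ x in Q, w (x i) = ∫ t in Ici 0, w t * volume.real (coordSlice Q i t) := by
  rw [integral_comp_eval hQ.isCompact i hw,
    setIntegral_eq_integral_of_forall_compl_eq_zero fun t ht => ?_]
  have hempty : coordSlice Q i t = ∅ :=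
    eq_empty_of_forall_notMem fun y hy => ht (by simpa using hQ.nonneg hy i)
  simp [hempty]

theorem setIntegral_volume_coordSlice (hQ : IsConvexCorner Q) (i : Fin (n + 1)) :
    ∫ t in Ici 0, volume.real (coordSlice Q i t) = volume.real Q := by
  simpa using (hQ.setIntegral_comp_eval i continuous_const (w := fun _ => 1)).symm

theorem integrableOn_pow_mul_volume_coordSlice (hQ : IsConvexCorner Q) (i : Fin (n + 1)) (m : ℕ) :
    IntegrableOn (fun t => t ^ m * volume.real (coordSlice Q i t)) (Ici 0) :=
  (integrable_mul_volume_coordSlice hQ.isCompact i (continuous_pow m)).integrableOn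

theorem integrableOn_volume_coordSlice (hQ : IsConvexCorner Q) (i : Fin (n + 1)) :
    IntegrableOn (fun t => volume.real (coordSlice Q i t)) (Ici 0) := by
  simpa using hQ.integrableOn_pow_mul_volume_coordSlice i 0

theorem sq_volume_coordSlice_mul_moment_le (hQ : IsConvexCorner Q) (hvol : 0 < volume.real Q)
    (i : Fin (n + 1)) :
    volume.real (coordSlice Q i 0) ^ 2 * ∫ x in Q, x i ^ 2 ≤ 2 * volume.real Q ^ 3 := by
  obtain ⟨R, hR⟩ := exists_coordSlice_eq_empty hQ.isCompact i
  rw [hQ.setIntegral_comp_eval i (continuous_pow 2), ← hQ.setIntegral_volume_coordSlice i]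
  exact sq_mul_setIntegral_sq_mul_le measureReal_nonneg
    (fun t _ θ hθ => volume_real_coordSlice_rpow_mul_le hQ.isCompact hQ.convex i t hθ)
    ⟨R, fun t ht => by simp [hR t ht]⟩ (by rwa [hQ.setIntegral_volume_coordSlice i])
    (hQ.integrableOn_volume_coordSlice i) (hQ.integrableOn_pow_mul_volume_coordSlice i 2)

theorem pow_three_volume_le (hQ : IsConvexCorner Q) (i : Fin (n + 1)) :
    volume.real Q ^ 3 ≤ 3 * volume.real (coordSlice Q i 0) ^ 2 * ∫ x in Q, x i ^ 2 := by
  rw [hQ.setIntegral_comp_eval i (continuous_pow 2), ← hQ.setIntegral_volume_coordSlice i]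
  exact pow_three_setIntegral_le (fun t _ => measureReal_nonneg)
    (fun t ht => measureReal_mono (hQ.coordSlice_anti i le_rfl ht)
      (isCompact_coordSlice hQ.isCompact i 0).measure_lt_top.ne)
    (hQ.integrableOn_volume_coordSlice i) (hQ.integrableOn_pow_mul_volume_coordSlice i 2)

theorem sum_mul_volume_coordSlice_le (hQ : IsConvexCorner Q) {α : Fin (n + 1) → ℝ} (hα : α ∈ Q) :
    ∑ i, α i * volume.real (coordSlice Q i 0) ≤ (n + 1) * volume.real Q := by
  have hfin (i : Fin (n + 1)) : volume (coordSlice Q i 0) ≠ ⊤ :=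
    (isCompact_coordSlice hQ.isCompact i 0).measure_lt_top.ne
  have h := ENNReal.toReal_mono hQ.isCompact.measure_lt_top.ne
    (sum_mul_volume_coordSlice_le_volume hQ.isCompact.measurableSet hQ.convex hQ.nonneg hα)
  have hterm (i : Fin (n + 1)) :
      (ENNReal.ofReal (α i / (n + 1)) * volume (coordSlice Q i 0)).toReal =
        α i * volume.real (coordSlice Q i 0) / (n + 1) := by
    rw [ENNReal.toReal_mul, ENNReal.toReal_ofReal (div_nonneg (hQ.nonneg hα i) (by positivity)),
      measureReal_def]
    ring
  rw [ENNReal.toReal_sum fun i _ => ENNReal.mul_ne_top ENNReal.ofReal_ne_top (hfin i)] at h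
  simp only [hterm, ← Finset.sum_div] at h
  exact (div_le_iff₀' (by positivity)).1 h

theorem exists_pow_le_volume_coordSlice (hQ : IsConvexCorner Q) (hne : Q.Nonempty) {r : ℝ}
    (hvol : volume.real Q = r ^ (n + 1)) :
    ∃ k, r ^ n ≤ volume.real (coordSlice Q k 0) := by
  have hfin (i : Fin (n + 1)) : volume (coordSlice Q i 0) ≠ ⊤ :=
    (isCompact_coordSlice hQ.isCompact i 0).measure_lt_top.ne
  have hLW := ENNReal.toReal_mono (ENNReal.prod_ne_top fun i _ => hfin i)
    (loomis_whitney hQ.isCompact.measurableSet hne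
      (fun i => measurableSet_coordSlice hQ.isCompact.measurableSet i 0)
      fun x hx i => hQ.removeNth_mem_coordSlice_zero hx i)
  rw [ENNReal.toReal_pow, ENNReal.toReal_prod, ← measureReal_def, hvol, pow_right_comm] at hLW
  obtain ⟨k, hk⟩ := Finite.exists_max fun i => volume.real (coordSlice Q i 0)
  refine ⟨k, le_of_pow_le_pow_left₀ n.succ_ne_zero measureReal_nonneg (hLW.trans ?_)⟩
  exact (Finset.prod_le_prod (fun i _ => measureReal_nonneg) fun i _ => hk i).trans_eq (by simp)

theorem moment_le_two_mul_pow (hQ : IsConvexCorner Q) {r M : ℝ} (hr : 0 < r)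
    (hvol : volume.real Q = r ^ (n + 1)) (hmoment : ∀ i, ∫ x in Q, x i ^ 2 = M) :
    M ≤ 2 * r ^ (n + 3) := by
  have hvol_pos : 0 < volume.real Q := hvol ▸ by positivity
  have hne : Q.Nonempty := nonempty_of_measureReal_ne_zero hvol_pos.ne'
  obtain ⟨k, hk⟩ := hQ.exists_pow_le_volume_coordSlice hne hvol
  have hupper := hQ.sq_volume_coordSlice_mul_moment_le hvol_pos k
  rw [hmoment, hvol] at hupper
  have hM0 : 0 ≤ M := hmoment k ▸ integral_nonneg fun x => sq_nonneg (x k)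
  refine le_of_mul_le_mul_left ?_ (pow_pos hr (2 * n))
  calc r ^ (2 * n) * M = (r ^ n) ^ 2 * M := by ring
    _ ≤ volume.real (coordSlice Q k 0) ^ 2 * M := by gcongr
    _ ≤ 2 * (r ^ (n + 1)) ^ 3 := hupper
    _ = r ^ (2 * n) * (2 * r ^ (n + 3)) := by ring

theorem pow_le_sqrt_six_mul_volume_coordSlice (hQ : IsConvexCorner Q) {r M : ℝ} (hr : 0 < r)
    (hvol : volume.real Q = r ^ (n + 1)) (hmoment : ∀ i, ∫ x in Q, x i ^ 2 = M)
    (i : Fin (n + 1)) : r ^ n ≤ √6 * volume.real (coordSlice Q i 0) := by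
  set s := volume.real (coordSlice Q i 0)
  have hlower := hQ.pow_three_volume_le i
  rw [hmoment, hvol] at hlower
  refine le_of_sq_le_sq ?_ (by positivity)
  rw [mul_pow, Real.sq_sqrt (by norm_num)]
  refine le_of_mul_le_mul_right ?_ (pow_pos hr (n + 3))
  calc (r ^ n) ^ 2 * r ^ (n + 3) = (r ^ (n + 1)) ^ 3 := by ring
    _ ≤ 3 * s ^ 2 * M := hlower
    _ ≤ 3 * s ^ 2 * (2 * r ^ (n + 3)) := by
        gcongr
        exact hQ.moment_le_two_mul_pow hr hvol hmoment
    _ = 6 * s ^ 2 * r ^ (n + 3) := by ring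

theorem sum_le_sqrt_six_mul (hQ : IsConvexCorner Q) {r M : ℝ} (hr : 0 < r)
    (hvol : volume.real Q = r ^ (n + 1)) (hmoment : ∀ i, ∫ x in Q, x i ^ 2 = M)
    {α : Fin (n + 1) → ℝ} (hα : α ∈ Q) : ∑ i, α i ≤ √6 * (n + 1) * r := by
  refine le_of_mul_le_mul_right ?_ (pow_pos hr n)
  calc (∑ i, α i) * r ^ n = ∑ i, α i * r ^ n := Finset.sum_mul _ _ _
    _ ≤ ∑ i, α i * (√6 * volume.real (coordSlice Q i 0)) :=
        Finset.sum_le_sum fun i _ => mul_le_mul_of_nonneg_left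
          (hQ.pow_le_sqrt_six_mul_volume_coordSlice hr hvol hmoment i) (hQ.nonneg hα i)
    _ = √6 * ∑ i, α i * volume.real (coordSlice Q i 0) := by
        simp only [Finset.mul_sum, mul_left_comm]
    _ ≤ √6 * ((n + 1) * r ^ (n + 1)) := by
        rw [← hvol]
        gcongr
        exact hQ.sum_mul_volume_coordSlice_le hα
    _ = √6 * (n + 1) * r * r ^ n := by ring

end IsConvexCorner

end

/-! ### Unconditional bodies -/

/-- A set is unconditional if it is symmetric with respect to all coordinate hyperplanes, that is,
stable under every change of signs of the coordinates. -/
def IsUnconditional {ι : Type*} (K : Set (ι → ℝ)) : Prop :=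
  ∀ x ∈ K, ∀ ε : ι → ℝ, (∀ i, ε i = 1 ∨ ε i = -1) → (fun i => ε i * x i) ∈ K

section

variable {ι : Type*} {K : Set (ι → ℝ)}

theorem IsUnconditional.mem_of_abs_le [Finite ι] (hK : IsUnconditional K) (hconv : Convex ℝ K)
    {x y : ι → ℝ} (hx : x ∈ K) (hyx : |y| ≤ |x|) : y ∈ K := by
  have hbox : univ.pi (fun _ : ι => Icc (-1 : ℝ) 1) ⊆ LinearMap.mulRight ℝ x ⁻¹' K := by
    rw [← segment_eq_Icc (by norm_num : (-1 : ℝ) ≤ 1), ← convexHull_pair, ← convexHull_pi]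
    exact convexHull_min (fun ε hε => hK x hx ε fun i => (hε i trivial).symm)
      (hconv.linear_preimage _)
  have hratio : (fun i => y i / x i) ∈ univ.pi fun _ : ι => Icc (-1 : ℝ) 1 := fun i _ => by
    rw [mem_Icc, ← abs_le, abs_div]
    exact div_le_one_of_le₀ (hyx i) (abs_nonneg _)
  have hmul : (fun i => y i / x i) * x = y := by
    ext i
    refine div_mul_cancel_of_imp fun hxi => ?_
    simpa [hxi] using hyx i
  simpa only [mem_preimage, LinearMap.mulRight_apply, hmul] using hbox hratio

theorem IsUnconditional.isConvexCorner_inter_Ici [Finite ι] (hK : IsUnconditional K)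
    (hconv : Convex ℝ K) (hcomp : IsCompact K) : IsConvexCorner (K ∩ Ici 0) where
  convex := hconv.inter (convex_Ici 0)
  isCompact := hcomp.inter_right isClosed_Ici
  nonneg := inter_subset_right
  mem_of_le {x y} hx hy hyx :=
    ⟨hK.mem_of_abs_le hconv hx.1 (by rwa [abs_of_nonneg hy, abs_of_nonneg hx.2]), hy⟩

theorem IsUnconditional.preimage_abs_inter_Ici [Finite ι] (hK : IsUnconditional K)
    (hconv : Convex ℝ K) : abs ⁻¹' (K ∩ Ici 0) = K := by
  ext x
  exact ⟨fun hx => hK.mem_of_abs_le hconv hx.1 (abs_abs x).ge,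
    fun hx => ⟨hK.mem_of_abs_le hconv hx (abs_abs x).le, abs_nonneg x⟩⟩

theorem map_abs_volume_real :
    (volume : Measure ℝ).map abs = (2 : ℝ≥0) • volume.restrict (Ici 0) := by
  ext s hs
  have hpos : abs ⁻¹' s ∩ Ici 0 = s ∩ Ici 0 := by
    ext t
    exact and_congr_left fun ht => by rw [mem_preimage, abs_of_nonneg ht]
  have hneg : abs ⁻¹' s ∩ (Ici 0)ᶜ = -(s ∩ Ioi 0) := by
    ext t
    simp only [compl_Ici, mem_inter_iff, mem_preimage, mem_Iio, Set.mem_neg, mem_Ioi, neg_pos]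
    exact and_congr_left fun ht => by rw [abs_of_neg ht]
  have hIoi : volume (s ∩ Ioi 0) = volume (s ∩ Ici 0) :=
    measure_congr ((ae_eq_refl s).inter Ioi_ae_eq_Ici)
  rw [Measure.map_apply continuous_abs.measurable hs, ← measure_inter_add_sdiff _ measurableSet_Ici,
    sdiff_eq, hpos, hneg, Measure.measure_neg, hIoi, Measure.smul_apply,
    Measure.restrict_apply hs, ENNReal.smul_def, ENNReal.coe_ofNat, smul_eq_mul, two_mul]

theorem map_abs_volume [Fintype ι] : (volume : Measure (ι → ℝ)).map abs =
    (2 : ℝ≥0) ^ Fintype.card ι • volume.restrict (Ici 0) := by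
  have hfinite (_ : ι) : SigmaFinite ((volume : Measure ℝ).map abs) :=
    map_abs_volume_real ▸ inferInstance
  have hmap := Measure.pi_map_pi (hμ := hfinite) fun _ => continuous_abs.measurable.aemeasurable
  simp only [map_abs_volume_real] at hmap
  refine hmap.trans (Measure.pi_eq fun s hs => ?_)
  rw [Measure.smul_apply, Measure.restrict_apply (.univ_pi hs), ← pi_univ_Ici, ← pi_inter_distrib,
    volume_pi_pi, ← Finset.card_univ, Finset.smul_prod]
  simp only [Measure.smul_apply, Measure.restrict_apply (hs _), Pi.zero_apply]

theorem IsUnconditional.setIntegral_comp_abs [Fintype ι] (hK : IsUnconditional K)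
    (hconv : Convex ℝ K) (hmeas : MeasurableSet K) {f : (ι → ℝ) → ℝ} (hf : Measurable f) :
    ∫ x in K, f |x| = 2 ^ Fintype.card ι * ∫ x in K ∩ Ici 0, f x := by
  have hpos : MeasurableSet (K ∩ Ici 0) := hmeas.inter measurableSet_Ici
  have habs : Measurable (abs : (ι → ℝ) → ι → ℝ) :=
    measurable_pi_lambda _ fun i => (measurable_pi_apply i).abs
  conv_lhs => rw [← hK.preimage_abs_inter_Ici hconv]
  rw [← setIntegral_map hpos hf.aestronglyMeasurable habs.aemeasurable, map_abs_volume,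
    Measure.restrict_smul, integral_smul_nnreal_measure, Measure.restrict_restrict hpos,
    inter_assoc, inter_self, NNReal.smul_def]
  simp

end

theorem IsUnconditional.sum_abs_le {n : ℕ} {K : Set (Fin n → ℝ)} (hK : IsUnconditional K)
    (hconv : Convex ℝ K) (hcomp : IsCompact K) {r M : ℝ} (hr : 0 < r)
    (hvol : volume.real K = r ^ n) (hmoment : ∀ i, ∫ x in K, x i ^ 2 = M) {x : Fin n → ℝ}
    (hx : x ∈ K) : ∑ i, |x i| ≤ √6 / 2 * n * r := by
  obtain _ | n := n
  · simp
  have hmeas := hcomp.measurableSet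
  have hvol_pos : volume.real (K ∩ Ici 0) = (r / 2) ^ (n + 1) := by
    have h := hK.setIntegral_comp_abs hconv hmeas (f := fun _ => 1) measurable_const
    simp only [setIntegral_const, smul_eq_mul, mul_one, Fintype.card_fin, hvol] at h
    rw [div_pow, h, mul_div_cancel_left₀ _ (by positivity)]
  have hmoment_pos (i : Fin (n + 1)) : ∫ y in K ∩ Ici 0, y i ^ 2 = M / 2 ^ (n + 1) := by
    have h := hK.setIntegral_comp_abs hconv hmeas (f := fun y => y i ^ 2)
      ((measurable_pi_apply i).pow_const 2)
    simp only [Pi.abs_apply, sq_abs, Fintype.card_fin, hmoment] at h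
    rw [h, mul_div_cancel_left₀ _ (by positivity)]
  have habs : |x| ∈ K ∩ Ici 0 :=
    ⟨hK.mem_of_abs_le hconv hx (abs_abs x).le, abs_nonneg x⟩
  calc ∑ i, |x i| ≤ √6 * (n + 1) * (r / 2) :=
        (hK.isConvexCorner_inter_Ici hconv hcomp).sum_le_sqrt_six_mul (half_pos hr) hvol_pos
          hmoment_pos habs
    _ = √6 / 2 * (n + 1 : ℕ) * r := by push_cast; ring

theorem unconditional_body_in_scaled_l1_ball_general {n : ℕ} {K : Set (Fin n → ℝ)}
    (hK : IsUnconditional K) (hconv : Convex ℝ K) (hcomp : IsCompact K) {r M : ℝ} (hr : 0 < r)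
    (hvol : volume.real K = r ^ n) (hmoment : ∀ i, ∫ x in K, x i ^ 2 = M) :
    (∀ x ∈ K, ∑ i, |x i| ≤ √6 / 2 * n * r) ∧
    ∀ L ⊆ K, volume L ≠ 0 → ⨍ x in L, ∑ i, |x i| ≤ √6 / 2 * n * r := by
  have hbound (x : Fin n → ℝ) (hx : x ∈ K) := hK.sum_abs_le hconv hcomp hr hvol hmoment hx
  refine ⟨hbound, fun L hLK hL => ?_⟩
  have hcont : Continuous fun x : Fin n → ℝ => ∑ i, |x i| := by fun_prop
  have hae : ∀ᵐ x ∂volume.restrict L, ∑ i, |x i| ≤ √6 / 2 * n * r :=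
    ae_mono (Measure.restrict_mono hLK le_rfl) ((ae_restrict_mem hcomp.measurableSet).mono hbound)
  exact (convex_Iic _).set_average_mem isClosed_Iic hL
    (measure_ne_top_of_subset hLK hcomp.measure_ne_top) hae
    ((hcont.continuousOn.integrableOn_compact hcomp).mono_set hLK)

end

/-- An isotropic unconditional convex body `K ⊂ ℝⁿ` satisfies
`K ⊆ (√6/2)·n·B₁ⁿ`, and consequently every convex body `L ⊆ K` containing the
origin satisfies `(1/|L|)·∫_L ‖x‖₁ dx ≤ (√6/2)·n`. -/
theorem unconditional_body_in_scaled_l1_ball (n : ℕ) (hn : 1 ≤ n)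
    (K : Set (Fin n → ℝ)) (hconv : Convex ℝ K) (hcomp : IsCompact K)
    (hint : (interior K).Nonempty) (hvol : volume K = 1)
    (huncond : ∀ x ∈ K, ∀ ε : Fin n → ℝ, (∀ i, ε i = 1 ∨ ε i = -1) →
      (fun i => ε i * x i) ∈ K)
    (LK : ℝ)
    (hiso : ∀ θ : Fin n → ℝ, ∑ i, (θ i) ^ 2 = 1 →
      ∫ x in K, (∑ i, x i * θ i) ^ 2 = LK ^ 2) :
    (∀ x ∈ K, ∑ i, |x i| ≤ (Real.sqrt 6 / 2) * n) ∧
    (∀ L : Set (Fin n → ℝ), Convex ℝ L → IsCompact L → (interior L).Nonempty →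
      L ⊆ K → (0 : Fin n → ℝ) ∈ L →
      (volume L).toReal⁻¹ * ∫ x in L, ∑ i, |x i| ≤ (Real.sqrt 6 / 2) * n) := by
  have hvol_real : volume.real K = 1 ^ n := by simp [measureReal_def, hvol]
  have hmoment (i : Fin n) : ∫ x in K, x i ^ 2 = LK ^ 2 := by
    simpa [Pi.single_apply] using hiso (Pi.single i 1) (by simp [Pi.single_apply])
  obtain ⟨hbound, haverage⟩ := unconditional_body_in_scaled_l1_ball_general huncond hconv hcomp
    one_pos hvol_real hmoment
  simp only [mul_one, setAverage_eq, measureReal_def, smul_eq_mul] at hbound haverage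
  exact ⟨hbound, fun L _ _ hLint hLK _ =>
    haverage L hLK (Measure.measure_pos_of_nonempty_interior volume hLint).ne'⟩
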